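/- Let Γ be a group, φ : Γ → Γ an automorphism, and N a normal subgroup of finite index in Γ with φ(N) = N. Let θ : N → N be the automorphism of N obtained by restricting φ. If θ has infinitely many twisted conjugacy classes in N, then φ has infinitely many twisted conjugacy classes in Γ. (Equivalently: any infinite family of elements of N lying in pairwise distinct θ-twisted conjugacy classes of N cannot all lie in a single φ-twisted conjugacy class of Γ; in fact infinitely many of them remain in pairwise distinct φ-twisted conjugacy classes.) -/

import Mathlib

/-- `x` and `y` are `φ`-twisted conjugate: there is `g` with `y = g * x * φ(g)⁻¹`. -/
def TwistedConj {Γ : Type*} [Group Γ] (φ : Γ ≃* Γ) (x y : Γ) : Prop :=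
  ∃ g : Γ, y = g * x * (φ g)⁻¹

theorem twistedConj_equivalence {Γ : Type*} [Group Γ] (φ : Γ ≃* Γ) :
    Equivalence (TwistedConj φ) where
  refl x := ⟨1, by simp⟩
  symm := by
    rintro x y ⟨g, rfl⟩
    exact ⟨g⁻¹, by simp [mul_assoc]⟩
  trans := by
    rintro x y z ⟨g, rfl⟩ ⟨k, rfl⟩
    exact ⟨k * g, by simp [mul_assoc]⟩

/-- Let `N` be a normal subgroup of finite index in `Γ`, preserved by an automorphism
`φ` of `Γ`, and let `θ` be the restriction of `φ` to `N`.  If `θ` has infinitely many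
twisted conjugacy classes in `N`, then `φ` has infinitely many twisted conjugacy
classes in `Γ`. -/
theorem stmt3 {Γ : Type*} [Group Γ] (N : Subgroup Γ) [N.Normal] [N.FiniteIndex]
    (φ : Γ ≃* Γ) (hφN : ∀ g : Γ, g ∈ N ↔ φ g ∈ N)
    (θ : N ≃* N) (hθ : ∀ n : N, (θ n : Γ) = φ (n : Γ))
    (h : Infinite (Quot (TwistedConj θ))) :
    Infinite (Quot (TwistedConj φ)) := by
  by_contra hfin
  rw [not_infinite_iff_finite] at hfin
  have key : ∀ q : Quot (TwistedConj θ), ∃ g : Γ, ((q.out : N) : Γ) =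
      g * (Quot.mk (TwistedConj φ) ((q.out : N) : Γ)).out * (φ g)⁻¹ := by
    intro q
    have h1 : Quot.mk (TwistedConj φ) (Quot.mk (TwistedConj φ) ((q.out : N) : Γ)).out
        = Quot.mk (TwistedConj φ) ((q.out : N) : Γ) := Quot.out_eq _
    exact ((twistedConj_equivalence φ).quot_mk_eq_iff _ _).1 h1
  choose g hg using key
  have hinj : Function.Injective (fun q : Quot (TwistedConj θ) =>
      ((Quot.mk (TwistedConj φ) ((q.out : N) : Γ), (QuotientGroup.mk (g q) : Γ ⧸ N)) :
        Quot (TwistedConj φ) × (Γ ⧸ N))) := by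
    intro p q hpq
    obtain ⟨h1, h2⟩ := Prod.mk.inj hpq
    have h3 : g q * (g p)⁻¹ ∈ N :=
      (inferInstance : N.Normal).mem_comm (QuotientGroup.eq.1 h2)
    rw [← Quot.out_eq p, ← Quot.out_eq q]
    apply Quot.sound
    refine ⟨⟨_, h3⟩, Subtype.ext ?_⟩
    have hp := hg p
    have hq := hg q
    rw [← h1] at hq
    generalize (Quot.mk (TwistedConj φ) ((p.out : N) : Γ)).out = x at hp hq
    simp only [Subgroup.coe_mul, Subgroup.coe_inv, hθ]
    rw [hp, hq]
    simp [mul_assoc]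
  exact not_finite_iff_infinite.2 h (Finite.of_injective _ hinj)
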